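/- Let P ⊆ Φ_{B_n} be a signed poset and suppose there are linearly independent vectors β_1, …, β_n ∈ P with K^rt_P = {c_1β_1 + ⋯ + c_nβ_n : c_1,…,c_n ≥ 0} (so the root cone is pointed, full-dimensional and simplicial). Then for every x ∈ ℝ^n with ⟨x, β_i⟩ > 0 for all 1 ≤ i ≤ n and ⟨x, w(α_j)⟩ ≠ 0 for all w ∈ 𝓛(P) and all 1 ≤ j ≤ n: Σ_{w ∈ 𝓛(P)} ∏_{j=1}^n ⟨x, w(α_j)⟩^{−1} = |det(β_1, …, β_n)| · ∏_{i=1}^n ⟨x, β_i⟩^{−1}, where det(β_1,…,β_n) is the determinant of the n × n matrix whose columns are β_1,…,β_n. -/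

import Mathlib

open scoped Classical

noncomputable section

/-- Signed index set `±[n]`: `(true, i)` represents `+i`, `(false, i)` represents `-i`. -/
abbrev SIdx (n : ℕ) := Bool × Fin n

/-- Negation `a ↦ -a` on `±[n]`. -/
def negS {n : ℕ} (a : SIdx n) : SIdx n := (!a.1, a.2)

/-- Standard basis vector `e_i` of `ℝ^n`. -/
def stdB (n : ℕ) (i : Fin n) : Fin n → ℝ := Pi.single i 1

/-- `rsgn true = 1`, `rsgn false = -1`. -/
def rsgn (s : Bool) : ℝ := if s then 1 else -1

/-- `v(a)` for `a ∈ ±[n]`: `v(+i) = e_i`, `v(-i) = -e_i`. -/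
def vS {n : ℕ} (a : SIdx n) : Fin n → ℝ := rsgn a.1 • stdB n a.2

/-- `v` on `±[n] ∪ {0}` (with `none` playing the role of `0`). -/
def vO {n : ℕ} : Option (SIdx n) → (Fin n → ℝ)
  | none => 0
  | some a => vS a

/-- Negation on `±[n] ∪ {0}`, fixing `0`. -/
def negO {n : ℕ} : Option (SIdx n) → Option (SIdx n)
  | none => none
  | some a => some (negS a)

/-- Standard inner product on `ℝ^n`. -/
def dotR {n : ℕ} (x y : Fin n → ℝ) : ℝ := ∑ i, x i * y i

/-- The type `B_n` root system `Φ_{B_n}`. -/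
def BnRoots (n : ℕ) : Set (Fin n → ℝ) :=
  {α | (∃ i j : Fin n, i < j ∧ ∃ s t : Bool, α = rsgn s • stdB n i + rsgn t • stdB n j) ∨
    ∃ i : Fin n, ∃ s : Bool, α = rsgn s • stdB n i}

/-- The positive roots `Φ⁺_{B_n}`. -/
def BnPos (n : ℕ) : Set (Fin n → ℝ) :=
  {α | (∃ i j : Fin n, i < j ∧ ∃ t : Bool, α = stdB n i + rsgn t • stdB n j) ∨
    ∃ i : Fin n, α = stdB n i}

/-- The type `C_n` root system `Φ_{C_n}`. -/
def CnRoots (n : ℕ) : Set (Fin n → ℝ) :=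
  {α | (∃ i j : Fin n, i < j ∧ ∃ s t : Bool, α = rsgn s • stdB n i + rsgn t • stdB n j) ∨
    ∃ i : Fin n, ∃ s : Bool, α = (2 * rsgn s) • stdB n i}

/-- Nonnegative real linear combinations of elements of `S`. -/
def nnSpan {n : ℕ} (S : Set (Fin n → ℝ)) : Set (Fin n → ℝ) :=
  {x | ∃ (r : ℕ) (c : Fin r → ℝ) (β : Fin r → (Fin n → ℝ)),
    (∀ m, 0 ≤ c m) ∧ (∀ m, β m ∈ S) ∧ x = ∑ m, c m • β m}

/-- A signed poset: a subset of `Φ_{B_n}`, antisymmetric and closed under positive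
linear combinations remaining in `Φ_{B_n}`. -/
def IsSignedPoset (n : ℕ) (P : Set (Fin n → ℝ)) : Prop :=
  P ⊆ BnRoots n ∧ (∀ α ∈ P, -α ∉ P) ∧ ∀ α ∈ BnRoots n, α ∈ nnSpan P → α ∈ P

/-- A `C_n`-signed poset. -/
def IsCnSignedPoset (n : ℕ) (Q : Set (Fin n → ℝ)) : Prop :=
  Q ⊆ CnRoots n ∧ (∀ α ∈ Q, -α ∉ Q) ∧ ∀ α ∈ CnRoots n, α ∈ nnSpan Q → α ∈ Q

/-- The root cone `K^rt_P`. -/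
def rootCone {n : ℕ} (P : Set (Fin n → ℝ)) : Set (Fin n → ℝ) := nnSpan P

/-- The weight cone `K^wt_P`. -/
def weightCone {n : ℕ} (P : Set (Fin n → ℝ)) : Set (Fin n → ℝ) :=
  {f | ∀ α ∈ P, 0 ≤ dotR f α}

/-- The Fischer (strict) order on `±[n] ∪ {0}`:
`a < b` iff `v(a) - v(b) ∈ P`, or (`b = -a ≠ 0` and `v(a) ∈ P`). -/
def fLT {n : ℕ} (P : Set (Fin n → ℝ)) (a b : Option (SIdx n)) : Prop :=
  vO a - vO b ∈ P ∨ (a ≠ none ∧ b = negO a ∧ vO a ∈ P)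

/-- A subset of `±[n]` is isotropic if it contains no pair `{i, -i}`. -/
def Isotropic {n : ℕ} (J : Finset (SIdx n)) : Prop :=
  ∀ i : Fin n, ¬((true, i) ∈ J ∧ (false, i) ∈ J)

/-- Signed characteristic vector of a subset of `±[n]`. -/
def chiF {n : ℕ} (J : Finset (SIdx n)) : Fin n → ℝ := fun i =>
  if (true, i) ∈ J then 1 else if (false, i) ∈ J then -1 else 0

/-- `J` is an ideal of the signed poset `P`. -/
def IsIdeal {n : ℕ} (P : Set (Fin n → ℝ)) (J : Finset (SIdx n)) : Prop :=
  Isotropic J ∧ ∀ α ∈ P, 0 ≤ dotR (chiF J) α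

/-- Comparability in the Fischer order of `P`. -/
def fComp {n : ℕ} (P : Set (Fin n → ℝ)) (a b : SIdx n) : Prop :=
  fLT P (some a) (some b) ∨ fLT P (some b) (some a)

/-- One step in the comparability graph on a subset `J` of `±[n]`. -/
def connStep {n : ℕ} (P : Set (Fin n → ℝ)) (J : Finset (SIdx n)) (a b : SIdx n) : Prop :=
  a ∈ J ∧ b ∈ J ∧ fComp P a b

/-- `J` is connected: nonempty, and any two of its elements are joined by a path inside `J`
in the comparability graph of the Fischer order of `P`. -/
def IsConnectedIdl {n : ℕ} (P : Set (Fin n → ℝ)) (J : Finset (SIdx n)) : Prop :=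
  J.Nonempty ∧ ∀ a ∈ J, ∀ b ∈ J, Relation.ReflTransGen (connStep P J) a b

/-- A connected ideal of `P`. -/
def IsConnIdeal {n : ℕ} (P : Set (Fin n → ℝ)) (J : Finset (SIdx n)) : Prop :=
  IsIdeal P J ∧ IsConnectedIdl P J

/-- Support `supp J = {|a| : a ∈ J}`. -/
def suppF {n : ℕ} (J : Finset (SIdx n)) : Finset (Fin n) := J.image Prod.snd

/-- `J` and `K` intersect nontrivially. -/
def NontrivInter {n : ℕ} (J K : Finset (SIdx n)) : Prop :=
  (suppF J ∩ suppF K).Nonempty ∧ ¬J ⊆ K ∧ ¬K ⊆ J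

/-- `J` and `K` intersect trivially. -/
def TrivInter {n : ℕ} (J K : Finset (SIdx n)) : Prop := ¬NontrivInter J K

/-- A signed permutation, as an anti-symmetric bijection of `±[n]`. -/
def IsSPerm {n : ℕ} (w : SIdx n ≃ SIdx n) : Prop := ∀ a, w (negS a) = negS (w a)

/-- Linear action of a signed permutation on `ℝ^n`, determined by `w(e_i) = v(w(+i))`. -/
def spAct {n : ℕ} (w : SIdx n ≃ SIdx n) (x : Fin n → ℝ) : Fin n → ℝ :=
  ∑ i, x i • vS (w (true, i))

/-- `w` is a linear extension of `P`: a signed permutation with `P ⊆ w(Φ⁺_{B_n})`. -/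
def IsLinExt {n : ℕ} (P : Set (Fin n → ℝ)) (w : SIdx n ≃ SIdx n) : Prop :=
  IsSPerm w ∧ ∀ α ∈ P, ∃ β ∈ BnPos n, α = spAct w β

/-- The (finite) set `𝓛(P)` of linear extensions of `P`. -/
def linExts (n : ℕ) (P : Set (Fin n → ℝ)) : Finset (SIdx n ≃ SIdx n) :=
  Finset.univ.filter (IsLinExt P)

/-- Simple roots of `Φ_{B_n}`: `α_i = e_i - e_{i+1}` for `i < n - 1`, `α_{n-1} = e_{n-1}`
(0-indexed). -/
def simpleRoot (n : ℕ) (i : Fin n) : Fin n → ℝ := fun j =>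
  (if j = i then (1 : ℝ) else 0) - if (j : ℕ) = (i : ℕ) + 1 then 1 else 0

/-- `J^w_m = {w(1), …, w(m)}` (0-indexed: the images under `w` of `+1, …, +(m+1)`). -/
def JwSet {n : ℕ} (w : SIdx n ≃ SIdx n) (m : Fin n) : Finset (SIdx n) :=
  (Finset.univ.filter (fun j : Fin n => j ≤ m)).image (fun j => w (true, j))

/-- An extensible ideal of `P`. -/
def Extensible (n : ℕ) (P : Set (Fin n → ℝ)) (J : Finset (SIdx n)) : Prop :=
  ∃ I : Finset (SIdx n), I.Nonempty ∧ Disjoint I J ∧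
    IsIdeal P (J ∪ I) ∧ IsIdeal P (J ∪ I.image negS)

/-- The finite set `J_conn(P)` of connected ideals of `P`. -/
def JconnF (n : ℕ) (P : Set (Fin n → ℝ)) : Finset (Finset (SIdx n)) :=
  Finset.univ.filter (IsConnIdeal P)

/-- Membership in `Π(P)`: an unordered pair of nontrivially intersecting connected ideals. -/
def inPiP {n : ℕ} (P : Set (Fin n → ℝ)) (p : Sym2 (Finset (SIdx n))) : Prop :=
  ∃ J K : Finset (SIdx n),
    p = s(J, K) ∧ IsConnIdeal P J ∧ IsConnIdeal P K ∧ NontrivInter J K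

/-- The finite set `Π(P)` of unordered pairs of nontrivially intersecting connected ideals. -/
def PiP (n : ℕ) (P : Set (Fin n → ℝ)) : Finset (Sym2 (Finset (SIdx n))) :=
  Finset.univ.filter (inPiP P)

/-- No connected ideal of `P` intersects two or more other connected ideals nontrivially. -/
def NoDoubleNontriv (n : ℕ) (P : Set (Fin n → ℝ)) : Prop :=
  ∀ J K K' : Finset (SIdx n), IsConnIdeal P J → IsConnIdeal P K → IsConnIdeal P K' →
    NontrivInter J K → NontrivInter J K' → K = K'

/-- The connected component of `a` inside `J` (w.r.t. the Fischer comparability graph). -/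
def componentIn {n : ℕ} (P : Set (Fin n → ℝ)) (J : Finset (SIdx n)) (a : SIdx n) :
    Finset (SIdx n) :=
  J.filter (fun b => Relation.ReflTransGen (connStep P J) a b)

/-- The set of connected components of `J`. -/
def componentsOf {n : ℕ} (P : Set (Fin n → ℝ)) (J : Finset (SIdx n)) :
    Finset (Finset (SIdx n)) :=
  J.image (componentIn P J)

/-- The signed support `supp±(f) = {sgn(f_i)·i : f_i ≠ 0}` of a vector `f ∈ ℝ^n`. -/
def suppPM {n : ℕ} (f : Fin n → ℝ) : Finset (SIdx n) :=
  Finset.univ.filter (fun a : SIdx n => if a.1 then 0 < f a.2 else f a.2 < 0)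

/-- Index type for the variables `U_J`, `J` a connected ideal of `P`. -/
abbrev ConnIdx (n : ℕ) (P : Set (Fin n → ℝ)) := {J : Finset (SIdx n) // IsConnIdeal P J}

/-- Integer signed characteristic vector, as an exponent vector for Laurent monomials. -/
def chiZ {n : ℕ} (J : Finset (SIdx n)) : Fin n →₀ ℤ :=
  Finsupp.equivFunOnFinite.symm (fun i =>
    if (true, i) ∈ J then 1 else if (false, i) ∈ J then -1 else 0)

/-- The map `φ : k[U_J : J ∈ J_conn(P)] → k[x_1^{±1}, …, x_n^{±1}]`, `U_J ↦ x^{χ_J}`. -/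
def phiWt (n : ℕ) (P : Set (Fin n → ℝ)) (k : Type) [Field k] :
    MvPolynomial (ConnIdx n P) k →ₐ[k] AddMonoidAlgebra k (Fin n →₀ ℤ) :=
  MvPolynomial.aeval (fun J => AddMonoidAlgebra.single (chiZ J.val) 1)

/-- The binomial `syz(U_J, U_K) = U_J U_K - (∏_A U_A) (∏_B U_B)`, where `A` runs over the
connected components of `J ∩ K` and `B` over the connected components of `supp±(χ_J + χ_K)`. -/
def syzPoly (n : ℕ) (P : Set (Fin n → ℝ)) (k : Type) [Field k] (J K : ConnIdx n P) :
    MvPolynomial (ConnIdx n P) k :=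
  MvPolynomial.X J * MvPolynomial.X K -
    (∏ A ∈ Finset.univ.filter
        (fun A : ConnIdx n P => (A : Finset (SIdx n)) ∈ componentsOf P (J.val ∩ K.val)),
        MvPolynomial.X A) *
      ∏ B ∈ Finset.univ.filter
        (fun B : ConnIdx n P =>
          (B : Finset (SIdx n)) ∈ componentsOf P (suppPM (chiF J.val + chiF K.val))),
        MvPolynomial.X B

/-- `θ_1, …, θ_r` is a regular sequence: the ideal it generates is proper, and each `θ_{m+1}`
is a non-zero-divisor modulo the ideal generated by `θ_1, …, θ_m`. -/
def IsRegSeq {R : Type} [CommRing R] {r : ℕ} (θ : Fin r → R) : Prop :=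
  Ideal.span (Set.range θ) ≠ ⊤ ∧
    ∀ (m : ℕ) (hm : m < r) (x : R),
      θ ⟨m, hm⟩ * x ∈ Ideal.span (θ '' {j : Fin r | (j : ℕ) < m}) →
        x ∈ Ideal.span (θ '' {j : Fin r | (j : ℕ) < m})

/-- The induced signed poset `P_A = P ∩ span_ℝ{e_i : i ∈ A}`. -/
def inducedPoset (n : ℕ) (P : Set (Fin n → ℝ)) (A : Finset (Fin n)) : Set (Fin n → ℝ) :=
  {α | α ∈ P ∧ α ∈ Submodule.span ℝ (stdB n '' (A : Set (Fin n)))}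

/-- The major index of a signed permutation. -/
def majB {n : ℕ} (w : SIdx n ≃ SIdx n) : ℕ :=
  ∑ i ∈ Finset.univ.filter
      (fun i : Fin n => spAct w (simpleRoot n i) ∉ BnPos n), ((i : ℕ) + 1)

/-- `[m]_q = 1 + q + ⋯ + q^{m-1}` in `ℤ[q]`. -/
def qInt (m : ℕ) : Polynomial ℤ := ∑ t ∈ Finset.range m, Polynomial.X ^ t

/-- The symmetric function `{J, K} ↦ ⟨x, χ_J + χ_K⟩` on unordered pairs. -/
def pairDot {n : ℕ} (x : Fin n → ℝ) : Sym2 (Finset (SIdx n)) → ℝ :=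
  Sym2.lift ⟨fun J K => dotR x (chiF J + chiF K),
    fun J K => congrArg (dotR x) (add_comm (chiF J) (chiF K))⟩

/-- The symmetric function `{J, K} ↦ [|J| + |K|]_q` on unordered pairs. -/
def pairQ {n : ℕ} : Sym2 (Finset (SIdx n)) → Polynomial ℤ :=
  Sym2.lift ⟨fun J K => qInt (J.card + K.card),
    fun J K => congrArg qInt (Nat.add_comm J.card K.card)⟩

/-- The principal order ideal `I_≤(a)` in the Fischer order restricted to `±[n]`. -/
def Ile {n : ℕ} (P : Set (Fin n → ℝ)) (a : SIdx n) : Set (SIdx n) :=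
  {b | b = a ∨ fLT P (some b) (some a)}

/-- A set of signed indices is isotropic if it contains no pair `{i, -i}`. -/
def IsoSet {n : ℕ} (S : Set (SIdx n)) : Prop :=
  ∀ i : Fin n, ¬((true, i) ∈ S ∧ (false, i) ∈ S)

/-- A covering pair of the Fischer order of `P`. -/
def CovPair {n : ℕ} (P : Set (Fin n → ℝ)) (a b : Option (SIdx n)) : Prop :=
  fLT P a b ∧ ¬∃ c : Option (SIdx n), fLT P a c ∧ fLT P c b

/-- The set of covering roots of `P`. -/
def covRoots {n : ℕ} (P : Set (Fin n → ℝ)) : Set (Fin n → ℝ) :=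
  {x | ∃ a b : Option (SIdx n), CovPair P a b ∧ x = vO a - vO b}

/-- The set `J_ε = {i : ε_i = 1} ∪ {-i : ε_i = -1}` attached to a `{-1,0,1}`-vector. -/
def Jeps {n : ℕ} (ε : Fin n → ℝ) : Set (SIdx n) :=
  {a | (a.1 = true ∧ ε a.2 = 1) ∨ (a.1 = false ∧ ε a.2 = -1)}

/-!
The roots `w(α_j)` are the normals of the walls of the chamber of `w`, and `w` is a linear extension
of `P` exactly when the chamber vector `w(n, …, 2, 1)` is positive on `P`. So the linear extensions
of `P` are those of the generators `β_1, …, β_n` of its cone, and the identity can be proved for an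
arbitrary basis of `ℝ^n` consisting of roots, by induction on the number of its linear extensions.

If `β_i = β_k + aγ` with `a > 0` and `γ` a root, the hyperplane `γ^⊥` cuts the dual cone in two:
replacing `β_i` by `γ`, or `β_k` by `-γ`, gives two bases whose linear extensions partition those of
`β`, and the right-hand side is additive because
`⟨x, β_i⟩ / (a ⟨x, γ⟩) - ⟨x, β_k⟩ / (a ⟨x, γ⟩) = 1`. Both parts are nonempty, since the dual cone of
a basis has interior points and these can be moved into the dominant chamber. If no such splitting
exists, the basis is `w(α_1), …, w(α_n)` for a unique `w`.

Splitting may create roots orthogonal to `x`, so the induction is run for `x` off all root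
hyperplanes; both sides are continuous at the given `x` and such regular vectors are dense.
-/

section Preliminaries

theorem det_of_eq_mul_det_update {ι R : Type*} [Fintype ι] [DecidableEq ι] [CommRing R]
    {β : ι → ι → R} {i k : ι} (hik : i ≠ k) {a : R} {γ : ι → R} (h : β i = β k + a • γ) :
    (Matrix.of β).det = a * (Matrix.of (Function.update β i γ)).det := by
  have hrow : Matrix.of β i + (-1 : R) • Matrix.of β k = a • γ := by
    change β i + (-1 : R) • β k = a • γ
    rw [h, neg_one_smul]
    abel
  rw [← Matrix.det_updateRow_add_smul_self (Matrix.of β) hik (-1), hrow,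
    Matrix.det_updateRow_smul]
  rfl

theorem injective_of_det_of_ne_zero {ι R : Type*} [Fintype ι] [DecidableEq ι] [CommRing R]
    {β : ι → ι → R} (hdet : (Matrix.of β).det ≠ 0) : Function.Injective β := fun _ _ hik =>
  not_ne_iff.1 fun hne => hdet (Matrix.det_zero_of_row_eq hne hik)

theorem mul_prod_comp_update {ι α M : Type*} [Fintype ι] [DecidableEq ι] [CommMonoid M]
    (f : α → M) (β : ι → α) (i : ι) (γ : α) :
    f (β i) * ∏ j, f (Function.update β i γ j) = f γ * ∏ j, f (β j) := by
  have hrest : ∏ j ∈ Finset.univ.erase i, f (Function.update β i γ j) =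
      ∏ j ∈ Finset.univ.erase i, f (β j) :=
    Finset.prod_congr rfl fun j hj => by rw [Function.update_of_ne (Finset.ne_of_mem_erase hj)]
  rw [← Finset.mul_prod_erase _ _ (Finset.mem_univ i),
    ← Finset.mul_prod_erase _ (fun j => f (β j)) (Finset.mem_univ i), Function.update_self, hrest,
    mul_left_comm]

theorem eq_self_of_injective_of_le {n : ℕ} {f : Fin n → Fin n} (hf : Function.Injective f)
    (hle : ∀ m, m ≤ f m) (m : Fin n) : f m = m := by
  have hsum : ∑ m : Fin n, (m : ℕ) = ∑ m, (f m : ℕ) :=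
    (Equiv.sum_comp (Equiv.ofBijective f hf.bijective_of_finite) Fin.val).symm
  have heq := (Finset.sum_eq_sum_iff_of_le fun m _ => Fin.le_def.1 (hle m)).1 hsum
  exact Fin.ext (heq m (Finset.mem_univ m)).symm

end Preliminaries

section SignedIndices

variable {n : ℕ}

theorem dotR_eq_dotProduct (x y : Fin n → ℝ) : dotR x y = x ⬝ᵥ y := rfl

theorem dotR_add (x y z : Fin n → ℝ) : dotR x (y + z) = dotR x y + dotR x z :=
  dotProduct_add x y z

theorem dotR_neg (x y : Fin n → ℝ) : dotR x (-y) = -dotR x y :=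
  dotProduct_neg x y

theorem dotR_smul (x : Fin n → ℝ) (a : ℝ) (y : Fin n → ℝ) : dotR x (a • y) = a * dotR x y :=
  dotProduct_smul a x y

theorem dotR_stdB (x : Fin n → ℝ) (i : Fin n) : dotR x (stdB n i) = x i := by
  rw [dotR_eq_dotProduct, stdB, dotProduct_single_one]

theorem dotR_vS (x : Fin n → ℝ) (a : SIdx n) : dotR x (vS a) = rsgn a.1 * x a.2 := by
  rw [vS, dotR_smul, dotR_stdB]

theorem vS_true (i : Fin n) : vS (true, i) = stdB n i := by simp [vS, rsgn]

theorem vS_negS (a : SIdx n) : vS (negS a) = -vS a := by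
  rcases a with ⟨_ | _, i⟩ <;> simp [vS, negS, rsgn]

theorem snd_eq_snd_iff (a b : SIdx n) : a.2 = b.2 ↔ a = b ∨ a = negS b := by
  rcases a with ⟨_ | _, i⟩ <;> rcases b with ⟨_ | _, j⟩ <;> simp [negS]

theorem dotR_vS_self (a : SIdx n) : dotR (vS a) (vS a) = 1 := by
  rw [dotR_vS]
  rcases a with ⟨_ | _, i⟩ <;> simp [vS, stdB, rsgn]

theorem dotR_vS_vS_of_ne {a b : SIdx n} (h : a.2 ≠ b.2) : dotR (vS a) (vS b) = 0 := by
  rw [dotR_vS]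
  simp [vS, stdB, h.symm]

theorem IsSPerm.snd_apply_eq_iff {w : SIdx n ≃ SIdx n} (hw : IsSPerm w) (a b : SIdx n) :
    (w a).2 = (w b).2 ↔ a.2 = b.2 := by
  simp only [snd_eq_snd_iff, ← hw b, w.apply_eq_iff_eq]

theorem IsSPerm.symm {w : SIdx n ≃ SIdx n} (hw : IsSPerm w) : IsSPerm w.symm := fun a => by
  rw [w.symm_apply_eq, hw, w.apply_symm_apply]

end SignedIndices

section Action

variable {n : ℕ} {w : SIdx n ≃ SIdx n}

/-- The matrix of a signed permutation, with rows `w(e_1), …, w(e_n)`. It acts on row vectors from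
the right, so that `spAct w` is `Matrix.vecMul` and `Matrix.mulVec` gives the inverse action. -/
def spMatrix (w : SIdx n ≃ SIdx n) : Matrix (Fin n) (Fin n) ℝ :=
  Matrix.of fun i => vS (w (true, i))

theorem spAct_eq_vecMul (w : SIdx n ≃ SIdx n) (x : Fin n → ℝ) :
    spAct w x = Matrix.vecMul x (spMatrix w) :=
  (Matrix.vecMul_eq_sum x (spMatrix w)).symm

theorem spAct_add (w : SIdx n ≃ SIdx n) (x y : Fin n → ℝ) :
    spAct w (x + y) = spAct w x + spAct w y := by
  simp only [spAct_eq_vecMul, Matrix.add_vecMul]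

theorem spAct_smul (w : SIdx n ≃ SIdx n) (a : ℝ) (x : Fin n → ℝ) :
    spAct w (a • x) = a • spAct w x := by
  simp only [spAct_eq_vecMul, Matrix.smul_vecMul]

theorem spAct_neg (w : SIdx n ≃ SIdx n) (x : Fin n → ℝ) : spAct w (-x) = -spAct w x := by
  simp only [spAct_eq_vecMul, Matrix.neg_vecMul]

theorem spAct_stdB (w : SIdx n ≃ SIdx n) (i : Fin n) :
    spAct w (stdB n i) = vS (w (true, i)) := by
  rw [spAct_eq_vecMul, stdB, Matrix.single_one_vecMul]
  rfl

theorem IsSPerm.spAct_vS (hw : IsSPerm w) (a : SIdx n) : spAct w (vS a) = vS (w a) := by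
  rcases a with ⟨_ | _, i⟩
  · rw [show ((false, i) : SIdx n) = negS (true, i) from rfl, vS_negS, spAct_neg, vS_true,
      spAct_stdB, hw, vS_negS]
  · rw [vS_true, spAct_stdB]

theorem IsSPerm.spMatrix_mul_transpose (hw : IsSPerm w) :
    spMatrix w * (spMatrix w).transpose = 1 := by
  ext i j
  change dotR (vS (w (true, i))) (vS (w (true, j))) = _
  rcases eq_or_ne i j with rfl | hij
  · rw [dotR_vS_self, Matrix.one_apply_eq]
  · rw [dotR_vS_vS_of_ne (mt (hw.snd_apply_eq_iff _ _).1 hij), Matrix.one_apply_ne hij]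

theorem IsSPerm.dotR_spAct_spAct (hw : IsSPerm w) (x y : Fin n → ℝ) :
    dotR (spAct w x) (spAct w y) = dotR x y := by
  rw [dotR_eq_dotProduct, spAct_eq_vecMul, spAct_eq_vecMul, ← Matrix.mulVec_transpose _ y,
    ← Matrix.dotProduct_mulVec, Matrix.mulVec_mulVec, hw.spMatrix_mul_transpose,
    Matrix.one_mulVec, dotR_eq_dotProduct]

theorem IsSPerm.spAct_injective (hw : IsSPerm w) : Function.Injective (spAct w) := by
  refine Function.LeftInverse.injective (g := fun y => Matrix.vecMul y (spMatrix w).transpose) ?_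
  intro x
  change Matrix.vecMul (spAct w x) (spMatrix w).transpose = x
  rw [spAct_eq_vecMul, Matrix.vecMul_vecMul, hw.spMatrix_mul_transpose, Matrix.vecMul_one]

theorem dotR_spAct_right (w : SIdx n ≃ SIdx n) (x y : Fin n → ℝ) :
    dotR x (spAct w y) = dotR (Matrix.mulVec (spMatrix w) x) y := by
  rw [spAct_eq_vecMul, dotR_eq_dotProduct, dotProduct_comm, ← Matrix.dotProduct_mulVec,
    dotProduct_comm, dotR_eq_dotProduct]

theorem IsSPerm.abs_det_spMatrix (hw : IsSPerm w) : |(spMatrix w).det| = 1 := by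
  have hsq : (spMatrix w).det * (spMatrix w).det = 1 := by
    simpa using congrArg Matrix.det hw.spMatrix_mul_transpose
  rcases mul_self_eq_one_iff.1 hsq with h | h <;> simp [h]

theorem IsSPerm.abs_det_of_spAct (hw : IsSPerm w) (δ : Fin n → Fin n → ℝ) :
    |(Matrix.of fun i => spAct w (δ i)).det| = |(Matrix.of δ).det| := by
  have hmul : (Matrix.of fun i => spAct w (δ i)) = Matrix.of δ * spMatrix w := by
    ext i j
    exact congrFun (spAct_eq_vecMul w (δ i)) j
  rw [hmul, Matrix.det_mul, abs_mul, hw.abs_det_spMatrix, mul_one]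

end Action

section Roots

variable {n : ℕ} {γ : Fin n → ℝ}

theorem mem_BnRoots_iff : γ ∈ BnRoots n ↔
    (∃ a b : SIdx n, a.2 ≠ b.2 ∧ γ = vS a + vS b) ∨ ∃ a : SIdx n, γ = vS a := by
  constructor
  · rintro (⟨i, j, hij, s, t, rfl⟩ | ⟨i, s, rfl⟩)
    · exact .inl ⟨(s, i), (t, j), hij.ne, rfl⟩
    · exact .inr ⟨(s, i), rfl⟩
  · rintro (⟨a, b, hab, rfl⟩ | ⟨a, rfl⟩)
    · rcases lt_or_gt_of_ne hab with h | h
      · exact .inl ⟨a.2, b.2, h, a.1, b.1, rfl⟩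
      · exact .inl ⟨b.2, a.2, h, b.1, a.1, add_comm _ _⟩
    · exact .inr ⟨a.2, a.1, rfl⟩

theorem vS_mem_BnRoots (a : SIdx n) : vS a ∈ BnRoots n := mem_BnRoots_iff.2 (.inr ⟨a, rfl⟩)

theorem vS_add_vS_mem_BnRoots {a b : SIdx n} (h : a.2 ≠ b.2) : vS a + vS b ∈ BnRoots n :=
  mem_BnRoots_iff.2 (.inl ⟨a, b, h, rfl⟩)

theorem neg_mem_BnRoots (h : γ ∈ BnRoots n) : -γ ∈ BnRoots n := by
  rcases mem_BnRoots_iff.1 h with ⟨a, b, hab, rfl⟩ | ⟨a, rfl⟩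
  · rw [neg_add, ← vS_negS, ← vS_negS]
    exact vS_add_vS_mem_BnRoots hab
  · exact vS_negS a ▸ vS_mem_BnRoots _

theorem IsSPerm.spAct_mem_BnRoots {w : SIdx n ≃ SIdx n} (hw : IsSPerm w) (h : γ ∈ BnRoots n) :
    spAct w γ ∈ BnRoots n := by
  rcases mem_BnRoots_iff.1 h with ⟨a, b, hab, rfl⟩ | ⟨a, rfl⟩
  · rw [spAct_add, hw.spAct_vS, hw.spAct_vS]
    exact vS_add_vS_mem_BnRoots (mt (hw.snd_apply_eq_iff a b).1 hab)
  · exact hw.spAct_vS a ▸ vS_mem_BnRoots _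

theorem IsSPerm.exists_mem_BnRoots_spAct_eq {w : SIdx n ≃ SIdx n} (hw : IsSPerm w)
    (h : γ ∈ BnRoots n) : ∃ δ ∈ BnRoots n, spAct w δ = γ := by
  have hsymm := (hw.symm).snd_apply_eq_iff
  rcases mem_BnRoots_iff.1 h with ⟨a, b, hab, rfl⟩ | ⟨a, rfl⟩
  · refine ⟨_, vS_add_vS_mem_BnRoots (mt (hsymm a b).1 hab), ?_⟩
    rw [spAct_add, hw.spAct_vS, hw.spAct_vS, w.apply_symm_apply, w.apply_symm_apply]
  · exact ⟨_, vS_mem_BnRoots (w.symm a), by rw [hw.spAct_vS, w.apply_symm_apply]⟩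

theorem finite_BnRoots (n : ℕ) : (BnRoots n).Finite := by
  refine (Set.finite_range fun p : SIdx n × Option (SIdx n) => vS p.1 + vO p.2).subset ?_
  intro γ hγ
  rcases mem_BnRoots_iff.1 hγ with ⟨a, b, -, rfl⟩ | ⟨a, rfl⟩
  · exact ⟨(a, some b), rfl⟩
  · exact ⟨(a, none), add_zero _⟩

theorem mem_BnPos_or_neg_mem_BnPos (h : γ ∈ BnRoots n) : γ ∈ BnPos n ∨ -γ ∈ BnPos n := by
  rcases h with ⟨i, j, hij, _ | _, t, rfl⟩ | ⟨i, _ | _, rfl⟩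
  · exact .inr (.inl ⟨i, j, hij, !t, by cases t <;> simp [rsgn, add_comm]⟩)
  · exact .inl (.inl ⟨i, j, hij, t, by simp [rsgn]⟩)
  · exact .inr (.inr ⟨i, by simp [rsgn]⟩)
  · exact .inl (.inr ⟨i, by simp [rsgn]⟩)

theorem exists_eq_stdB_add_vO_of_mem_BnPos (h : γ ∈ BnPos n) :
    ∃ (m : Fin n) (o : Option (SIdx n)), γ = stdB n m + vO o ∧ ∀ a ∈ o, m < a.2 := by
  rcases h with ⟨i, j, hij, t, rfl⟩ | ⟨i, rfl⟩
  · exact ⟨i, some (t, j), rfl, by simpa using hij⟩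
  · exact ⟨i, none, (add_zero _).symm, by simp⟩

theorem exists_pos_smul_root_of_vO_ne {o o' : Option (SIdx n)} (h : vO o ≠ vO o') :
    ∃ a : ℝ, 0 < a ∧ ∃ γ ∈ BnRoots n, vO o = vO o' + a • γ := by
  rcases o with _ | a <;> rcases o' with _ | b
  · exact absurd rfl h
  · exact ⟨1, one_pos, _, vS_mem_BnRoots (negS b), by simp [vO, vS_negS]⟩
  · exact ⟨1, one_pos, _, vS_mem_BnRoots a, by simp [vO]⟩
  · by_cases hab : a.2 = b.2
    · rcases (snd_eq_snd_iff a b).1 hab with rfl | rfl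
      · exact absurd rfl h
      · exact ⟨2, two_pos, _, vS_mem_BnRoots (negS b), by simp [vO, vS_negS, two_smul]⟩
    · exact ⟨1, one_pos, _, vS_add_vS_mem_BnRoots (b := negS b) hab, by simp [vO, vS_negS]⟩

theorem dotR_eq_of_mem_BnPos (y : Fin n → ℝ) (h : γ ∈ BnPos n) :
    (∃ i, dotR y γ = y i) ∨
      ∃ i j, i < j ∧ (dotR y γ = y i + y j ∨ dotR y γ = y i - y j) := by
  rcases h with ⟨i, j, hij, t, rfl⟩ | ⟨i, rfl⟩
  · refine .inr ⟨i, j, hij, ?_⟩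
    rw [dotR_add, dotR_smul, dotR_stdB, dotR_stdB]
    cases t <;> simp [rsgn, sub_eq_add_neg]
  · exact .inl ⟨i, dotR_stdB y i⟩

theorem dotR_nonneg_of_mem_BnPos {y : Fin n → ℝ} (hanti : Antitone y) (hnonneg : ∀ i, 0 ≤ y i)
    (h : γ ∈ BnPos n) : 0 ≤ dotR y γ := by
  rcases dotR_eq_of_mem_BnPos y h with ⟨i, hi⟩ | ⟨i, j, hij, hsum | hdiff⟩
  · exact hi ▸ hnonneg i
  · exact hsum ▸ add_nonneg (hnonneg i) (hnonneg j)
  · exact hdiff ▸ sub_nonneg.2 (hanti hij.le)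

theorem dotR_pos_of_mem_BnPos {y : Fin n → ℝ} (hanti : StrictAnti y) (hpos : ∀ i, 0 < y i)
    (h : γ ∈ BnPos n) : 0 < dotR y γ := by
  rcases dotR_eq_of_mem_BnPos y h with ⟨i, hi⟩ | ⟨i, j, hij, hsum | hdiff⟩
  · exact hi ▸ hpos i
  · exact hsum ▸ add_pos (hpos i) (hpos j)
  · exact hdiff ▸ sub_pos.2 (hanti hij)

end Roots

section Chambers

variable {n : ℕ} {w w' : SIdx n ≃ SIdx n} {γ : Fin n → ℝ} {P : Set (Fin n → ℝ)}

/-- The vector `(n, n - 1, …, 1)`: the point of the dominant chamber that pairs to `1` with every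
simple root. -/
def rho (n : ℕ) : Fin n → ℝ := fun i => n - (i : ℕ)

theorem rho_pos (i : Fin n) : 0 < rho n i :=
  sub_pos.2 (Nat.cast_lt.2 i.isLt)

theorem rho_strictAnti (n : ℕ) : StrictAnti (rho n) := fun _ _ h =>
  sub_lt_sub_left (Nat.cast_lt.2 h) _

theorem dotR_rho_vS_injective : Function.Injective fun a : SIdx n => dotR (rho n) (vS a) := by
  rintro ⟨s, i⟩ ⟨t, j⟩ h
  have hi := rho_pos i
  have hj := rho_pos j
  have hij : rho n i = rho n j → i = j := fun h => (rho_strictAnti n).injective h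
  cases s <;> cases t <;> simp only [dotR_vS, rsgn, if_true, Bool.false_eq_true, if_false] at h
  · rw [hij (by linarith)]
  · linarith
  · linarith
  · rw [hij (by linarith)]

theorem dotR_rho_pos (h : γ ∈ BnPos n) : 0 < dotR (rho n) γ :=
  dotR_pos_of_mem_BnPos (rho_strictAnti n) rho_pos h

theorem dotR_rho_ne_zero (h : γ ∈ BnRoots n) : dotR (rho n) γ ≠ 0 := by
  rcases mem_BnPos_or_neg_mem_BnPos h with hpos | hneg
  · exact (dotR_rho_pos hpos).ne'
  · exact neg_ne_zero.1 (dotR_neg (rho n) γ ▸ (dotR_rho_pos hneg).ne')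

theorem dotR_rho_pos_iff (h : γ ∈ BnRoots n) : 0 < dotR (rho n) γ ↔ γ ∈ BnPos n := by
  refine ⟨fun hpos => (mem_BnPos_or_neg_mem_BnPos h).resolve_right fun hneg => ?_, dotR_rho_pos⟩
  have := dotR_rho_pos hneg
  rw [dotR_neg] at this
  linarith

/-- The vector `w(n, …, 2, 1)`, an interior point of the chamber whose walls are orthogonal to the
roots `w(α_j)`. -/
def chamberVec (w : SIdx n ≃ SIdx n) : Fin n → ℝ := spAct w (rho n)

theorem IsSPerm.dotR_chamberVec_spAct (hw : IsSPerm w) (γ : Fin n → ℝ) :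
    dotR (chamberVec w) (spAct w γ) = dotR (rho n) γ :=
  hw.dotR_spAct_spAct _ _

theorem IsSPerm.dotR_chamberVec_ne_zero (hw : IsSPerm w) (h : γ ∈ BnRoots n) :
    dotR (chamberVec w) γ ≠ 0 := by
  obtain ⟨δ, hδ, rfl⟩ := hw.exists_mem_BnRoots_spAct_eq h
  exact hw.dotR_chamberVec_spAct δ ▸ dotR_rho_ne_zero hδ

theorem IsSPerm.dotR_chamberVec_pos_iff (hw : IsSPerm w) (h : γ ∈ BnRoots n) :
    0 < dotR (chamberVec w) γ ↔ ∃ δ ∈ BnPos n, γ = spAct w δ := by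
  obtain ⟨δ, hδ, rfl⟩ := hw.exists_mem_BnRoots_spAct_eq h
  rw [hw.dotR_chamberVec_spAct, dotR_rho_pos_iff hδ]
  exact ⟨fun hpos => ⟨δ, hpos, rfl⟩, fun ⟨δ', hδ', heq⟩ => hw.spAct_injective heq ▸ hδ'⟩

theorem IsSPerm.eq_of_chamberVec_eq (hw : IsSPerm w) (hw' : IsSPerm w')
    (h : chamberVec w = chamberVec w') : w = w' := by
  ext1 a
  have hheight : dotR (rho n) (vS (w'.symm (w a))) = dotR (rho n) (vS a) := by
    rw [← hw'.dotR_chamberVec_spAct, hw'.spAct_vS, w'.apply_symm_apply, ← h, ← hw.spAct_vS,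
      hw.dotR_chamberVec_spAct]
  exact w'.symm_apply_eq.1 (dotR_rho_vS_injective hheight)

theorem mem_linExts_iff (hP : P ⊆ BnRoots n) :
    w ∈ linExts n P ↔ IsSPerm w ∧ ∀ α ∈ P, 0 < dotR (chamberVec w) α := by
  rw [linExts, Finset.mem_filter_univ, IsLinExt]
  exact and_congr_right fun hw => forall₂_congr fun α hα =>
    (hw.dotR_chamberVec_pos_iff (hP hα)).symm

theorem mem_linExts_range_iff {β : Fin n → Fin n → ℝ} (hβ : ∀ i, β i ∈ BnRoots n) :
    w ∈ linExts n (Set.range β) ↔ IsSPerm w ∧ ∀ i, 0 < dotR (chamberVec w) (β i) := by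
  rw [mem_linExts_iff (Set.range_subset_iff.2 hβ), Set.forall_mem_range]

theorem linExts_eq_linExts_range {β : Fin n → Fin n → ℝ} (hP : P ⊆ BnRoots n)
    (hβP : ∀ i, β i ∈ P)
    (hcone : ∀ α ∈ P, ∃ c : Fin n → ℝ, (∀ i, 0 ≤ c i) ∧ α = ∑ i, c i • β i) :
    linExts n P = linExts n (Set.range β) := by
  ext w
  rw [mem_linExts_iff hP, mem_linExts_range_iff fun i => hP (hβP i)]
  refine and_congr_right fun hw => ⟨fun h i => h _ (hβP i), fun h α hα => ?_⟩
  refine lt_of_le_of_ne' ?_ (hw.dotR_chamberVec_ne_zero (hP hα))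
  obtain ⟨c, hc, rfl⟩ := hcone α hα
  rw [dotR_eq_dotProduct, dotProduct_sum]
  refine Finset.sum_nonneg fun i _ => ?_
  rw [dotProduct_smul]
  exact mul_nonneg (hc i) (h i).le

/-- The signed permutation `i ↦ ±σ(i)`, with the minus sign where `ε i = true`. -/
def signedPerm (σ : Equiv.Perm (Fin n)) (ε : Fin n → Bool) : SIdx n ≃ SIdx n where
  toFun a := (xor a.1 (ε a.2), σ a.2)
  invFun a := (xor a.1 (ε (σ.symm a.2)), σ.symm a.2)
  left_inv a := by simp
  right_inv a := by simp

theorem isSPerm_signedPerm (σ : Equiv.Perm (Fin n)) (ε : Fin n → Bool) :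
    IsSPerm (signedPerm σ ε) := fun a => by simp [signedPerm, negS]

theorem exists_isSPerm_antitone_mulVec (y : Fin n → ℝ) :
    ∃ w : SIdx n ≃ SIdx n, IsSPerm w ∧ Antitone (Matrix.mulVec (spMatrix w) y) ∧
      ∀ i, 0 ≤ Matrix.mulVec (spMatrix w) y i := by
  let σ := Tuple.sort fun i => -|y i|
  let w := signedPerm σ fun i => decide (y (σ i) < 0)
  have habs (i : Fin n) : Matrix.mulVec (spMatrix w) y i = |y (σ i)| := by
    change vS (w (true, i)) ⬝ᵥ y = _
    rw [dotProduct_comm, ← dotR_eq_dotProduct, dotR_vS]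
    rcases lt_or_ge (y (σ i)) 0 with h | h
    · simp [w, signedPerm, rsgn, h, abs_of_neg]
    · simp [w, signedPerm, rsgn, h, abs_of_nonneg, not_lt.2 h]
  refine ⟨w, isSPerm_signedPerm _ _, fun i j hij => ?_, fun i => habs i ▸ abs_nonneg _⟩
  rw [habs, habs]
  exact neg_le_neg_iff.1 (Tuple.monotone_sort (fun i => -|y i|) hij)

theorem linExts_range_nonempty {β : Fin n → Fin n → ℝ} (hβ : ∀ i, β i ∈ BnRoots n)
    (hdet : (Matrix.of β).det ≠ 0) : (linExts n (Set.range β)).Nonempty := by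
  have hunit : IsUnit (Matrix.of β) := (Matrix.isUnit_iff_isUnit_det _).2 hdet.isUnit
  obtain ⟨y, hy⟩ := Matrix.mulVec_surjective_iff_isUnit.2 hunit 1
  have hyβ (i : Fin n) : dotR y (β i) = 1 := (dotProduct_comm _ _).trans (congrFun hy i)
  obtain ⟨w, hw, hanti, hnonneg⟩ := exists_isSPerm_antitone_mulVec y
  refine ⟨w, (mem_linExts_range_iff hβ).2 ⟨hw, fun i => ?_⟩⟩
  obtain ⟨δ, hδ, hδβ⟩ := hw.exists_mem_BnRoots_spAct_eq (hβ i)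
  rw [← hδβ, hw.dotR_chamberVec_spAct, dotR_rho_pos_iff hδ]
  refine (mem_BnPos_or_neg_mem_BnPos hδ).resolve_right fun hneg => ?_
  have := dotR_nonneg_of_mem_BnPos hanti hnonneg hneg
  rw [dotR_neg, ← dotR_spAct_right, hδβ, hyβ] at this
  linarith

end Chambers

section Splitting

variable {n : ℕ} {β : Fin n → Fin n → ℝ} {i k : Fin n} {a : ℝ} {γ : Fin n → ℝ}

/-- The family `β` can be split along the root `γ`: two of its members differ by a positive
multiple of `γ`. -/
structure IsSplitting (β : Fin n → Fin n → ℝ) (i k : Fin n) (a : ℝ) (γ : Fin n → ℝ) : Prop where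
  ne : i ≠ k
  pos : 0 < a
  root : γ ∈ BnRoots n
  eq : β i = β k + a • γ

theorem IsSplitting.symm (h : IsSplitting β i k a γ) : IsSplitting β k i a (-γ) where
  ne := h.ne.symm
  pos := h.pos
  root := neg_mem_BnRoots h.root
  eq := by rw [h.eq, smul_neg, add_neg_cancel_right]

theorem IsSplitting.update_mem_BnRoots (h : IsSplitting β i k a γ) (hβ : ∀ j, β j ∈ BnRoots n) :
    ∀ j, Function.update β i γ j ∈ BnRoots n :=
  (Function.forall_update_iff β fun _ v => v ∈ BnRoots n).2 ⟨h.root, fun j _ => hβ j⟩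

theorem IsSplitting.det_eq (h : IsSplitting β i k a γ) :
    (Matrix.of β).det = a * (Matrix.of (Function.update β i γ)).det :=
  det_of_eq_mul_det_update h.ne h.eq

theorem IsSplitting.det_update_ne_zero (h : IsSplitting β i k a γ)
    (hdet : (Matrix.of β).det ≠ 0) : (Matrix.of (Function.update β i γ)).det ≠ 0 :=
  right_ne_zero_of_mul (h.det_eq ▸ hdet)

theorem IsSplitting.mem_linExts_update_iff (h : IsSplitting β i k a γ)
    (hβ : ∀ j, β j ∈ BnRoots n) {w : SIdx n ≃ SIdx n} :
    w ∈ linExts n (Set.range (Function.update β i γ)) ↔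
      w ∈ linExts n (Set.range β) ∧ 0 < dotR (chamberVec w) γ := by
  rw [mem_linExts_range_iff (h.update_mem_BnRoots hβ), mem_linExts_range_iff hβ,
    Function.forall_update_iff β fun _ v => 0 < dotR (chamberVec w) v]
  refine ⟨fun ⟨hw, hγ, hpos⟩ => ⟨⟨hw, fun j => ?_⟩, hγ⟩,
    fun ⟨⟨hw, hpos⟩, hγ⟩ => ⟨hw, hγ, fun j _ => hpos j⟩⟩
  rcases eq_or_ne j i with rfl | hj
  · rw [h.eq, dotR_add, dotR_smul]
    exact add_pos (hpos k h.ne.symm) (mul_pos h.pos hγ)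
  · exact hpos j hj

theorem IsSplitting.disjoint_linExts (h : IsSplitting β i k a γ) (hβ : ∀ j, β j ∈ BnRoots n) :
    Disjoint (linExts n (Set.range (Function.update β i γ)))
      (linExts n (Set.range (Function.update β k (-γ)))) := by
  refine Finset.disjoint_left.2 fun w hw hw' => ?_
  have hpos := ((h.mem_linExts_update_iff hβ).1 hw).2
  have hneg := ((h.symm.mem_linExts_update_iff hβ).1 hw').2
  rw [dotR_neg] at hneg
  linarith

theorem IsSplitting.linExts_eq_union (h : IsSplitting β i k a γ) (hβ : ∀ j, β j ∈ BnRoots n) :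
    linExts n (Set.range β) = linExts n (Set.range (Function.update β i γ)) ∪
      linExts n (Set.range (Function.update β k (-γ))) := by
  ext w
  rw [Finset.mem_union, h.mem_linExts_update_iff hβ, h.symm.mem_linExts_update_iff hβ,
    ← and_or_left, dotR_neg, neg_pos, iff_self_and]
  intro hw
  exact (((mem_linExts_range_iff hβ).1 hw).1.dotR_chamberVec_ne_zero h.root).lt_or_gt.symm

/-- The left-hand side of the identity: the sum over the linear extensions `w` of `P` of
`∏ ⟨x, w(α_j)⟩⁻¹`. -/
def linExtSum (P : Set (Fin n → ℝ)) (x : Fin n → ℝ) : ℝ :=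
  ∑ w ∈ linExts n P, ∏ j, (dotR x (spAct w (simpleRoot n j)))⁻¹

/-- The right-hand side of the identity, attached to the simplicial cone spanned by `β`. The
vectors `β i` are the rows of the matrix here. -/
def coneTerm (β : Fin n → Fin n → ℝ) (x : Fin n → ℝ) : ℝ :=
  |(Matrix.of β).det| * ∏ i, (dotR x (β i))⁻¹

theorem IsSplitting.linExtSum_eq_add (h : IsSplitting β i k a γ) (hβ : ∀ j, β j ∈ BnRoots n)
    (x : Fin n → ℝ) :
    linExtSum (Set.range β) x = linExtSum (Set.range (Function.update β i γ)) x +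
      linExtSum (Set.range (Function.update β k (-γ))) x := by
  rw [linExtSum, h.linExts_eq_union hβ, Finset.sum_union (h.disjoint_linExts hβ)]
  rfl

theorem IsSplitting.coneTerm_update (h : IsSplitting β i k a γ) {x : Fin n → ℝ}
    (hx : dotR x (β i) ≠ 0) :
    coneTerm (Function.update β i γ) x = coneTerm β x * (dotR x (β i) / (a * dotR x γ)) := by
  have hdet : |(Matrix.of (Function.update β i γ)).det| = |(Matrix.of β).det| / a := by
    rw [h.det_eq, abs_mul, abs_of_pos h.pos, mul_div_cancel_left₀ _ h.pos.ne']
  have hprod : ∏ j, (dotR x (Function.update β i γ j))⁻¹ =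
      dotR x (β i) * ((dotR x γ)⁻¹ * ∏ j, (dotR x (β j))⁻¹) := by
    rw [← mul_prod_comp_update (fun v => (dotR x v)⁻¹), mul_inv_cancel_left₀ hx]
  rw [coneTerm, coneTerm, hdet, hprod, div_eq_mul_inv, div_eq_mul_inv, mul_inv]
  ring

theorem IsSplitting.coneTerm_eq_add (h : IsSplitting β i k a γ) {x : Fin n → ℝ}
    (hi : dotR x (β i) ≠ 0) (hk : dotR x (β k) ≠ 0) (hγ : dotR x γ ≠ 0) :
    coneTerm β x =
      coneTerm (Function.update β i γ) x + coneTerm (Function.update β k (-γ)) x := by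
  have hβi : dotR x (β i) = dotR x (β k) + a * dotR x γ := by rw [h.eq, dotR_add, dotR_smul]
  have ha := h.pos.ne'
  have hratio : dotR x (β i) / (a * dotR x γ) + dotR x (β k) / (a * -dotR x γ) = 1 := by
    rw [hβi]
    field_simp
    ring
  rw [h.coneTerm_update hi, h.symm.coneTerm_update hk, dotR_neg, ← mul_add, hratio, mul_one]

end Splitting

section Unsplittable

variable {n : ℕ} {β δ : Fin n → Fin n → ℝ} {w w' : SIdx n ≃ SIdx n}

/-- The vector `-e_{s+1}`, read as `0` when `s` is the last index: the second summand of the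
simple root `α_s`. -/
def negStdBSucc (s : Fin n) : Fin n → ℝ := fun j => -if (j : ℕ) = (s : ℕ) + 1 then 1 else 0

theorem simpleRoot_eq_stdB_add (s : Fin n) : simpleRoot n s = stdB n s + negStdBSucc s := by
  ext j
  simp [simpleRoot, stdB, negStdBSucc, Pi.single_apply, sub_eq_add_neg]

theorem negStdBSucc_of_lt {s : Fin n} (hs : (s : ℕ) + 1 < n) :
    negStdBSucc s = -stdB n ⟨s + 1, hs⟩ := by
  ext j
  simp [negStdBSucc, stdB, Pi.single_apply, Fin.ext_iff]

theorem negStdBSucc_of_eq {s : Fin n} (hs : (s : ℕ) + 1 = n) : negStdBSucc s = 0 := by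
  ext j
  simp [negStdBSucc, hs, j.isLt.ne]

theorem dotR_rho_simpleRoot (s : Fin n) : dotR (rho n) (simpleRoot n s) = 1 := by
  rw [simpleRoot_eq_stdB_add, dotR_add, dotR_stdB]
  rcases (Nat.succ_le_of_lt s.isLt).lt_or_eq with hs | hs
  · rw [negStdBSucc_of_lt hs, dotR_neg, dotR_stdB]
    simp [rho]
  · have hcast : (s : ℝ) + 1 = n := mod_cast hs
    rw [negStdBSucc_of_eq hs, dotR_eq_dotProduct, dotProduct_zero, add_zero, rho, ← hcast,
      add_sub_cancel_left]

theorem det_simpleRoot (n : ℕ) : (Matrix.of (simpleRoot n)).det = 1 := by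
  rw [Matrix.det_of_isUpperTriangular]
  · simp [simpleRoot]
  · intro i j (hij : j < i)
    have hsucc : (j : ℕ) ≠ i + 1 := (Nat.lt_succ_of_lt (Fin.lt_def.1 hij)).ne
    simp [simpleRoot, hij.ne, hsucc]

theorem exists_vO_eq_negStdBSucc {m : Fin n} {o : Option (SIdx n)} (hm : ∀ a ∈ o, m < a.2)
    (ho : ∀ j, o ≠ some (true, j)) : ∃ s, m ≤ s ∧ vO o = negStdBSucc s := by
  have hmn := m.isLt
  rcases o with _ | ⟨_ | _, j⟩
  · refine ⟨⟨n - 1, by lia⟩, Fin.le_def.2 (Nat.le_sub_one_of_lt hmn), ?_⟩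
    rw [negStdBSucc_of_eq (Nat.sub_add_cancel (by lia))]
    rfl
  · have hmj : (m : ℕ) < j := hm _ rfl
    refine ⟨⟨j - 1, by lia⟩, Fin.le_def.2 (Nat.le_sub_one_of_lt hmj), ?_⟩
    rw [negStdBSucc_of_lt (by simp only; lia)]
    simp [vO, vS, rsgn, Nat.sub_add_cancel (Nat.one_le_of_lt hmj)]
  · exact absurd rfl (ho j)

/-- No two members of `β` differ by a positive multiple of a root, so that the induction on linear
extensions stops at `β`. -/
def Unsplittable (β : Fin n → Fin n → ℝ) : Prop := ∀ i k a γ, ¬IsSplitting β i k a γ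

theorem Unsplittable.eq_of_eq_add_vO (hδ : Unsplittable δ) (hinj : Function.Injective δ)
    {i k : Fin n} {u : Fin n → ℝ} {o o' : Option (SIdx n)} (hi : δ i = u + vO o)
    (hk : δ k = u + vO o') : i = k := by
  by_contra hik
  have hne : vO o ≠ vO o' := fun h => hik (hinj (by rw [hi, hk, h]))
  obtain ⟨a, ha, γ, hγ, heq⟩ := exists_pos_smul_root_of_vO_ne hne
  exact hδ i k a γ ⟨hik, ha, hγ, by rw [hi, hk, heq, add_assoc]⟩

theorem Unsplittable.exists_perm_eq_simpleRoot (hδ : Unsplittable δ)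
    (hinj : Function.Injective δ) (hpos : ∀ i, δ i ∈ BnPos n) :
    ∃ π : Equiv.Perm (Fin n), ∀ i, δ i = simpleRoot n (π i) := by
  choose lead tail hδeq hlead using fun i => exists_eq_stdB_add_vO_of_mem_BnPos (hpos i)
  have hlead_inj : Function.Injective lead := fun i k hik =>
    hδ.eq_of_eq_add_vO hinj (hδeq i) (hik ▸ hδeq k)
  let π : Equiv.Perm (Fin n) := Equiv.ofBijective lead hlead_inj.bijective_of_finite
  have htail (i j : Fin n) : tail i ≠ some (true, j) := by
    intro hij
    obtain ⟨k, rfl⟩ := π.surjective j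
    have hi : δ i = stdB n (lead k) + vO (some (true, lead i)) := by
      rw [hδeq i, hij, add_comm, vO, vO, vS_true, vS_true]
      rfl
    obtain rfl : i = k := hδ.eq_of_eq_add_vO hinj hi (hδeq k)
    exact lt_irrefl _ (hlead i _ hij)
  choose s hle hs using fun i => exists_vO_eq_negStdBSucc (hlead i) (htail i)
  have hs_inj : Function.Injective s := fun i k hik => by
    refine hδ.eq_of_eq_add_vO hinj (u := negStdBSucc (s i)) (o := some (true, lead i))
      (o' := some (true, lead k)) ?_ ?_
    · rw [hδeq i, hs i, add_comm, vO, vS_true]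
    · rw [hδeq k, hs k, hik, add_comm, vO, vS_true]
  have hs_eq (i : Fin n) : s i = π i := by
    have hfix := eq_self_of_injective_of_le (hs_inj.comp π.symm.injective)
      (fun m => (π.apply_symm_apply m).symm.le.trans (hle (π.symm m))) (π i)
    rwa [Function.comp_apply, π.symm_apply_apply] at hfix
  refine ⟨π, fun i => ?_⟩
  rw [hδeq i, hs i, hs_eq i, simpleRoot_eq_stdB_add]
  rfl

theorem Unsplittable.of_spAct (hw : IsSPerm w) (h : Unsplittable fun i => spAct w (δ i)) :
    Unsplittable δ := fun i k a γ hsplit =>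
  h i k a (spAct w γ) ⟨hsplit.ne, hsplit.pos, hw.spAct_mem_BnRoots hsplit.root, by
    rw [hsplit.eq, spAct_add, spAct_smul]⟩

theorem Unsplittable.exists_perm_eq_spAct_simpleRoot (hβ : Unsplittable β)
    (hinj : Function.Injective β) (hw : w ∈ linExts n (Set.range β)) :
    ∃ π : Equiv.Perm (Fin n), β = fun i => spAct w (simpleRoot n (π i)) := by
  obtain ⟨hperm, hpos⟩ := (Finset.mem_filter_univ w).1 hw
  choose δ hδ hβδ using fun i => hpos (β i) (Set.mem_range_self i)
  obtain rfl : β = fun i => spAct w (δ i) := funext hβδ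
  obtain ⟨π, hπ⟩ := (hβ.of_spAct hperm).exists_perm_eq_simpleRoot
    (fun i k hik => hinj (congrArg (spAct w) hik)) hδ
  exact ⟨π, funext fun i => congrArg (spAct w) (hπ i)⟩

theorem Unsplittable.eq_of_mem_linExts (hβ : Unsplittable β) (hdet : (Matrix.of β).det ≠ 0)
    (hw : w ∈ linExts n (Set.range β)) (hw' : w' ∈ linExts n (Set.range β)) : w = w' := by
  have hunit : IsUnit (Matrix.of β) := (Matrix.isUnit_iff_isUnit_det _).2 hdet.isUnit
  have hone {w : SIdx n ≃ SIdx n} (hw : w ∈ linExts n (Set.range β)) :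
      Matrix.mulVec (Matrix.of β) (chamberVec w) = 1 := by
    have hperm := ((Finset.mem_filter_univ w).1 hw).1
    obtain ⟨π, rfl⟩ := hβ.exists_perm_eq_spAct_simpleRoot (injective_of_det_of_ne_zero hdet) hw
    ext i
    exact (dotProduct_comm _ _).trans
      ((hperm.dotR_chamberVec_spAct _).trans (dotR_rho_simpleRoot (π i)))
  refine IsSPerm.eq_of_chamberVec_eq ((Finset.mem_filter_univ w).1 hw).1
    ((Finset.mem_filter_univ w').1 hw').1 ?_
  exact Matrix.mulVec_injective_of_isUnit hunit ((hone hw).trans (hone hw').symm)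

theorem IsSPerm.coneTerm_spAct_simpleRoot (hw : IsSPerm w) (π : Equiv.Perm (Fin n))
    (x : Fin n → ℝ) :
    coneTerm (fun i => spAct w (simpleRoot n (π i))) x =
      ∏ j, (dotR x (spAct w (simpleRoot n j)))⁻¹ := by
  have hdet : |(Matrix.of fun i => simpleRoot n (π i)).det| = 1 := by
    rw [← abs_one, ← det_simpleRoot n]
    exact Matrix.abs_det_submatrix_equiv_equiv π (Equiv.refl _) (Matrix.of (simpleRoot n))
  rw [coneTerm, hw.abs_det_of_spAct, hdet, one_mul]
  exact Equiv.prod_comp π fun j => (dotR x (spAct w (simpleRoot n j)))⁻¹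

theorem Unsplittable.linExtSum_eq_coneTerm (h : Unsplittable β) (hβ : ∀ i, β i ∈ BnRoots n)
    (hdet : (Matrix.of β).det ≠ 0) (x : Fin n → ℝ) :
    linExtSum (Set.range β) x = coneTerm β x := by
  obtain ⟨w, hw⟩ := linExts_range_nonempty hβ hdet
  have hsingle : linExts n (Set.range β) = {w} :=
    Finset.eq_singleton_iff_unique_mem.2 ⟨hw, fun w' hw' => h.eq_of_mem_linExts hdet hw' hw⟩
  rw [linExtSum, hsingle, Finset.sum_singleton]
  obtain ⟨π, rfl⟩ := h.exists_perm_eq_spAct_simpleRoot (injective_of_det_of_ne_zero hdet) hw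
  exact (((Finset.mem_filter_univ w).1 hw).1.coneTerm_spAct_simpleRoot π x).symm

end Unsplittable

section Identity

variable {n : ℕ} {β : Fin n → Fin n → ℝ} {P : Set (Fin n → ℝ)} {x : Fin n → ℝ}

theorem linExtSum_range_eq_coneTerm_of_regular (hβ : ∀ i, β i ∈ BnRoots n)
    (hdet : (Matrix.of β).det ≠ 0) (hx : ∀ γ ∈ BnRoots n, dotR x γ ≠ 0) :
    linExtSum (Set.range β) x = coneTerm β x := by
  induction hcard : (linExts n (Set.range β)).card using Nat.strong_induction_on
    generalizing β with
  | h N ih =>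
    by_cases hsplit : Unsplittable β
    · exact hsplit.linExtSum_eq_coneTerm hβ hdet x
    · simp only [Unsplittable, not_forall, not_not] at hsplit
      obtain ⟨i, k, a, γ, h⟩ := hsplit
      have hβi := h.update_mem_BnRoots hβ
      have hβk := h.symm.update_mem_BnRoots hβ
      have hdeti := h.det_update_ne_zero hdet
      have hdetk := h.symm.det_update_ne_zero hdet
      have hposi := (linExts_range_nonempty hβi hdeti).card_pos
      have hposk := (linExts_range_nonempty hβk hdetk).card_pos
      rw [h.linExts_eq_union hβ, Finset.card_union_of_disjoint (h.disjoint_linExts hβ)] at hcard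
      rw [h.linExtSum_eq_add hβ, ih _ (by lia) hβi hdeti rfl, ih _ (by lia) hβk hdetk rfl,
        ← h.coneTerm_eq_add (hx _ (hβ i)) (hx _ (hβ k)) (hx γ h.root)]

theorem continuous_dotR_left (v : Fin n → ℝ) : Continuous fun x => dotR x v :=
  continuous_id.dotProduct continuous_const

theorem dense_setOf_dotR_ne_zero {γ : Fin n → ℝ} (hγ : γ ∈ BnRoots n) :
    Dense {x | dotR x γ ≠ 0} := by
  let φ : (Fin n → ℝ) →ₗ[ℝ] ℝ := (dotProductBilin ℝ ℝ).flip γ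
  have hproper : LinearMap.ker φ ≠ ⊤ := fun htop =>
    dotR_rho_ne_zero hγ (LinearMap.mem_ker.1 (htop ▸ Submodule.mem_top : rho n ∈ LinearMap.ker φ))
  have hinterior : interior (LinearMap.ker φ : Set (Fin n → ℝ)) = ∅ :=
    Set.not_nonempty_iff_eq_empty.1 (mt (LinearMap.ker φ).eq_top_of_nonempty_interior' hproper)
  exact interior_eq_empty_iff_dense_compl.1 hinterior

theorem dense_setOf_forall_dotR_ne_zero (n : ℕ) :
    Dense {x : Fin n → ℝ | ∀ γ ∈ BnRoots n, dotR x γ ≠ 0} := by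
  simp only [Set.ofPred_forall]
  exact dense_biInter_of_isOpen
    (fun γ _ => isOpen_ne_fun (continuous_dotR_left γ) continuous_const)
    (finite_BnRoots n).countable fun γ => dense_setOf_dotR_ne_zero

theorem continuousAt_prod_inv_dotR {v : Fin n → Fin n → ℝ} (hx : ∀ i, dotR x (v i) ≠ 0) :
    ContinuousAt (fun y => ∏ i, (dotR y (v i))⁻¹) x :=
  tendsto_finsetProd _ fun i _ => (continuous_dotR_left (v i)).continuousAt.inv₀ (hx i)

theorem continuousAt_linExtSum
    (hx : ∀ w ∈ linExts n P, ∀ j, dotR x (spAct w (simpleRoot n j)) ≠ 0) :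
    ContinuousAt (linExtSum P) x :=
  tendsto_finsetSum _ fun w hw => continuousAt_prod_inv_dotR (hx w hw)

theorem continuousAt_coneTerm (hx : ∀ i, dotR x (β i) ≠ 0) : ContinuousAt (coneTerm β) x :=
  continuousAt_const.mul (continuousAt_prod_inv_dotR hx)

theorem linExtSum_range_eq_coneTerm (hβ : ∀ i, β i ∈ BnRoots n) (hdet : (Matrix.of β).det ≠ 0)
    (hx : ∀ i, dotR x (β i) ≠ 0)
    (hx' : ∀ w ∈ linExts n (Set.range β), ∀ j, dotR x (spAct w (simpleRoot n j)) ≠ 0) :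
    linExtSum (Set.range β) x = coneTerm β x := by
  have hfreq : ∃ᶠ y in nhds x, linExtSum (Set.range β) y = coneTerm β y :=
    (mem_closure_iff_frequently.1 (dense_setOf_forall_dotR_ne_zero n x)).mono fun _ hy =>
      linExtSum_range_eq_coneTerm_of_regular hβ hdet hy
  exact tendsto_nhds_unique_of_frequently_eq (continuousAt_linExtSum hx')
    (continuousAt_coneTerm hx) hfreq

theorem subset_rootCone (P : Set (Fin n → ℝ)) : P ⊆ rootCone P := fun α hα =>
  ⟨1, fun _ => 1, fun _ => α, by simp [hα]⟩

theorem statement_5_general (n : ℕ) (P : Set (Fin n → ℝ)) (hP : P ⊆ BnRoots n)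
    (β : Fin n → (Fin n → ℝ)) (hβP : ∀ i, β i ∈ P) (hβli : LinearIndependent ℝ β)
    (hcone : ∀ α ∈ P, ∃ c : Fin n → ℝ, (∀ i, 0 ≤ c i) ∧ α = ∑ i, c i • β i)
    (x : Fin n → ℝ) (hx : ∀ i, dotR x (β i) ≠ 0)
    (hx' : ∀ w ∈ linExts n P, ∀ j : Fin n, dotR x (spAct w (simpleRoot n j)) ≠ 0) :
    ∑ w ∈ linExts n P, ∏ j : Fin n, (dotR x (spAct w (simpleRoot n j)))⁻¹ =
      |(Matrix.of fun r c => β c r).det| * ∏ i : Fin n, (dotR x (β i))⁻¹ := by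
  have hdet : (Matrix.of β).det ≠ 0 :=
    ((Matrix.isUnit_iff_isUnit_det _).1
      ((Matrix.linearIndependent_rows_iff_isUnit (A := Matrix.of β)).1 hβli)).ne_zero
  have htranspose : (Matrix.of fun r c => β c r).det = (Matrix.of β).det :=
    Matrix.det_transpose (Matrix.of β)
  rw [htranspose, linExts_eq_linExts_range hP hβP hcone]
  rw [linExts_eq_linExts_range hP hβP hcone] at hx'
  exact linExtSum_range_eq_coneTerm (fun i => hP (hβP i)) hdet hx hx'

end Identity

theorem statement_5 (n : ℕ) (hn : 1 ≤ n) (P : Set (Fin n → ℝ)) (hP : IsSignedPoset n P)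
    (β : Fin n → (Fin n → ℝ)) (hβP : ∀ i, β i ∈ P) (hβli : LinearIndependent ℝ β)
    (hcone : rootCone P = {x | ∃ c : Fin n → ℝ, (∀ i, 0 ≤ c i) ∧ x = ∑ i, c i • β i})
    (x : Fin n → ℝ) (hx : ∀ i, 0 < dotR x (β i))
    (hx' : ∀ w ∈ linExts n P, ∀ j : Fin n, dotR x (spAct w (simpleRoot n j)) ≠ 0) :
    ∑ w ∈ linExts n P, ∏ j : Fin n, (dotR x (spAct w (simpleRoot n j)))⁻¹ =
      |(Matrix.of fun r c => β c r).det| * ∏ i : Fin n, (dotR x (β i))⁻¹ :=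
  statement_5_general n P hP.1 β hβP hβli (fun _ hα => hcone.subset (subset_rootCone P hα)) x
    (fun i => (hx i).ne') hx'
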